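/- arXiv:2512.00121 — 5 statements merged into one kernel-verified Lean document; each statement's English description precedes it below -/
import Mathlib

section
/- Let y₀, c ∈ ℝ with 0 < c < 2y₀, let ñ(φ) = (y₀ − c cos²φ)/sin(2φ), and let φ ∈ ℝ with sin(2φ) ≠ 0. Then ñ'(φ) = 0 if and only if cos²φ = y₀/(2y₀ − c). -/
/-! The quotient rule, the double-angle formulas and `sin² + cos² = 1` give
`ñ'(φ) = 2 (y₀ - (2 y₀ - c) cos²φ) / sin²(2φ)`. As `sin(2φ) ≠ 0` and `2 y₀ - c > 0`, this vanishes
exactly when `cos²φ = y₀ / (2 y₀ - c)`. -/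

/-- For `0 < c < 2y₀`, with `ñ(φ) = (y₀ - c cos²φ)/sin(2φ)` and
`φ` such that `sin(2φ) ≠ 0`, we have `ñ'(φ) = 0` iff `cos²φ = y₀/(2y₀ - c)`. -/
theorem reduced_rupture_critical_angle (y₀ c : ℝ) (hc0 : 0 < c)
    (hc1 : c < 2 * y₀) (φ : ℝ) (hs : Real.sin (2 * φ) ≠ 0) :
    deriv (fun φ : ℝ => (y₀ - c * Real.cos φ ^ 2) / Real.sin (2 * φ)) φ = 0 ↔
      Real.cos φ ^ 2 = y₀ / (2 * y₀ - c) := by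
  have hnum : HasDerivAt (fun φ : ℝ => y₀ - c * Real.cos φ ^ 2)
      (2 * c * Real.cos φ * Real.sin φ) φ := by
    refine ((((Real.hasDerivAt_cos φ).fun_pow 2).const_mul c).const_sub y₀).congr_deriv ?_
    push_cast
    ring
  have hden : HasDerivAt (fun φ : ℝ => Real.sin (2 * φ)) (2 * Real.cos (2 * φ)) φ := by
    refine ((hasDerivAt_id' φ).const_mul 2).sin.congr_deriv ?_
    ring
  -- With `u = cos²φ`, the quadratic terms in `u` cancel and the quotient-rule numerator is affine.
  have key : 2 * c * Real.cos φ * Real.sin φ * Real.sin (2 * φ)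
      - (y₀ - c * Real.cos φ ^ 2) * (2 * Real.cos (2 * φ))
      = 2 * (y₀ - Real.cos φ ^ 2 * (2 * y₀ - c)) := by
    rw [Real.sin_two_mul, Real.cos_two_mul]
    linear_combination (4 * c * Real.cos φ ^ 2) * Real.sin_sq_add_cos_sq φ
  have hpos : 2 * y₀ - c ≠ 0 := by linarith
  rw [(hnum.fun_div hden hs).deriv, key, div_eq_zero_iff, or_iff_left (pow_ne_zero 2 hs),
    eq_div_iff hpos]
  constructor <;> intro h <;> linarith
end

section
/- Let y₀, c ∈ ℝ with 0 < c < y₀, and let φ ∈ ℝ satisfy cos²φ = y₀/(2y₀ − c) and sin(2φ) > 0. Then the reduced rupture function attains the value ñ(φ) = (y₀ − c cos²φ)/sin(2φ) = √(y₀ (y₀ − c)). -/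
/-- For `0 < c < y₀` and `φ` with `cos²φ = y₀/(2y₀ - c)` and
`sin(2φ) > 0`, the reduced rupture function attains the value
`ñ(φ) = (y₀ - c cos²φ)/sin(2φ) = √(y₀(y₀ - c))`. -/
theorem reduced_rupture_value_at_critical_angle (y₀ c : ℝ) (hc0 : 0 < c)
    (hc1 : c < y₀) (φ : ℝ) (hφ : Real.cos φ ^ 2 = y₀ / (2 * y₀ - c))
    (hs : 0 < Real.sin (2 * φ)) :
    (y₀ - c * Real.cos φ ^ 2) / Real.sin (2 * φ)
      = Real.sqrt (y₀ * (y₀ - c)) := by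
  have hD : 0 < 2 * y₀ - c := by linarith
  have hD0 := hD.ne'
  have hP : 0 < y₀ * (y₀ - c) := mul_pos (by linarith) (by linarith)
  have hN : y₀ - c * Real.cos φ ^ 2 = 2 * (y₀ * (y₀ - c)) / (2 * y₀ - c) := by
    rw [hφ, eq_div_iff hD0, sub_mul, mul_assoc, div_mul_cancel₀ _ hD0]
    ring
  have hS : Real.sin (2 * φ) ^ 2 = 4 * (y₀ * (y₀ - c)) / (2 * y₀ - c) ^ 2 := by
    rw [Real.sin_two_mul, mul_pow, mul_pow, Real.sin_sq, hφ]
    field_simp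
    ring
  -- Both sides are nonnegative, so it suffices to compare squares.
  symm
  rw [Real.sqrt_eq_iff_eq_sq hP.le (by rw [hN]; positivity), div_pow, hS, hN]
  have := hP.ne'
  generalize y₀ * (y₀ - c) = p at *
  field_simp
  norm_num
end

section
/- Let y₀, c ∈ ℝ with 0 < c < y₀. Then for every u ∈ (0,1), the inequality (y₀ − c u)/(2√(u(1−u))) ≥ √(y₀ (y₀ − c)) holds, with equality if and only if u = y₀/(2y₀ − c). -/
/-!
Writing `y₀ - c u = y₀ (1 - u) + (y₀ - c) u`, the bound is the AM-GM inequality for the two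
positive numbers `y₀ (1 - u)` and `(y₀ - c) u`, and equality holds exactly when they agree.
Concretely, everything follows from the identity
`(y₀ - c u)² - 4 y₀ (y₀ - c) u (1 - u) = (y₀ - (2 y₀ - c) u)²`.
-/

/-- For `0 < c < y₀` and every `u ∈ (0,1)`, the inequality
`(y₀ - c u)/(2√(u(1-u))) ≥ √(y₀(y₀ - c))` holds, with equality iff
`u = y₀/(2y₀ - c)`. -/
theorem reduced_rupture_lower_bound (y₀ c : ℝ) (hc0 : 0 < c) (hc1 : c < y₀) :
    ∀ u ∈ Set.Ioo (0 : ℝ) 1,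
      Real.sqrt (y₀ * (y₀ - c)) ≤ (y₀ - c * u) / (2 * Real.sqrt (u * (1 - u))) ∧
      ((y₀ - c * u) / (2 * Real.sqrt (u * (1 - u))) = Real.sqrt (y₀ * (y₀ - c))
        ↔ u = y₀ / (2 * y₀ - c)) := by
  rintro u ⟨hu0, hu1⟩
  have hv : 0 < u * (1 - u) := mul_pos hu0 (by linarith)
  have hw : 0 ≤ y₀ * (y₀ - c) := mul_nonneg (by linarith) (by linarith)
  have hs : 0 < Real.sqrt (u * (1 - u)) := Real.sqrt_pos.2 hv
  have hr : 0 ≤ Real.sqrt (y₀ * (y₀ - c)) := Real.sqrt_nonneg _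
  have hs2 := Real.sq_sqrt hv.le
  have hr2 := Real.sq_sqrt hw
  set s := Real.sqrt (u * (1 - u))
  set r := Real.sqrt (y₀ * (y₀ - c))
  have hN : 0 ≤ y₀ - c * u := by nlinarith
  have hR : 0 ≤ r * (2 * s) := by positivity
  have key : (y₀ - c * u) ^ 2 - (r * (2 * s)) ^ 2 = (y₀ - (2 * y₀ - c) * u) ^ 2 := by
    have h : (r * (2 * s)) ^ 2 = 4 * (r ^ 2 * s ^ 2) := by ring
    rw [h, hr2, hs2]
    ring
  have h2s : 0 < 2 * s := by positivity
  have hd : 2 * y₀ - c ≠ 0 := by linarith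
  constructor
  · rw [le_div_iff₀ h2s]
    exact (sq_le_sq₀ hR hN).1 (by linarith [sq_nonneg (y₀ - (2 * y₀ - c) * u)])
  · rw [div_eq_iff h2s.ne', eq_div_iff hd, ← sq_eq_sq₀ hN hR, ← sub_eq_zero, key,
      sq_eq_zero_iff, sub_eq_zero, mul_comm, eq_comm]
end

section
/- Let y₀ > 0, ε ≠ 0, and c ∈ ℝ with 0 < c < y₀, and define n(φ) = (96 y₀⁶/(5 π ε²)) · (y₀ − c cos²φ)/sin(2φ). Then the infimum of n(φ) over all φ ∈ ℝ with sin(2φ) > 0 equals n_crit = (96 y₀⁶/(5 π ε²)) √(y₀ (y₀ − c)), and it is attained exactly at the angles φ with cos²φ = y₀/(2y₀ − c) and sin(2φ) > 0. -/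
/-!
Write `a = √y₀` and `b = √(y₀ - c)`, both positive. Since `sin² + cos² = 1`,
`y₀ - c cos²φ = a² sin²φ + b² cos²φ = (a sin φ - b cos φ)² + a b sin(2φ)`
(`sq_form_eq`). Dividing by `sin(2φ) > 0` shows that the rupture function exceeds the constant
multiple of `a b = √(y₀(y₀ - c))` by a nonnegative square over `sin(2φ)`, so the value is minimal
exactly when `a sin φ = b cos φ`. As `sin φ` and `cos φ` have the same sign, this is the condition
`a² sin²φ = b² cos²φ`, i.e. `cos²φ = a²/(a² + b²)` (`sin_eq_cos_iff`); it holds at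
`φ = arctan (b/a)`.
-/

theorem sq_form_eq (a b φ : ℝ) :
    a ^ 2 - (a ^ 2 - b ^ 2) * Real.cos φ ^ 2 =
      (a * Real.sin φ - b * Real.cos φ) ^ 2 + a * b * Real.sin (2 * φ) := by
  rw [Real.sin_two_mul]
  linear_combination (-a ^ 2) * Real.sin_sq_add_cos_sq φ

/-- The excess of the rupture function over its critical value, with prefactor `K`. -/
theorem excess_eq (K a b φ : ℝ) (hφ : 0 < Real.sin (2 * φ)) :
    K * (a ^ 2 - (a ^ 2 - b ^ 2) * Real.cos φ ^ 2) / Real.sin (2 * φ) =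
      K * (a * b) + K * (a * Real.sin φ - b * Real.cos φ) ^ 2 / Real.sin (2 * φ) := by
  rw [sq_form_eq]
  field_simp
  ring

theorem sin_eq_cos_iff (a b φ : ℝ) (ha : 0 < a) (hb : 0 < b) (hφ : 0 < Real.sin (2 * φ)) :
    a * Real.sin φ - b * Real.cos φ = 0 ↔ Real.cos φ ^ 2 = a ^ 2 / (a ^ 2 + b ^ 2) := by
  have h1 := Real.sin_sq_add_cos_sq φ
  have hsc : 0 < Real.sin φ * Real.cos φ := by
    rw [Real.sin_two_mul] at hφ; linarith
  -- `sin φ` and `cos φ` have the same sign, so the conjugate factor cannot vanish.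
  have hne : a * Real.sin φ + b * Real.cos φ ≠ 0 := by
    intro h
    have h2 : a * Real.sin φ ^ 2 + b * (Real.sin φ * Real.cos φ) = 0 := by
      linear_combination Real.sin φ * h
    have h3 : 0 < b * (Real.sin φ * Real.cos φ) := mul_pos hb hsc
    have h4 : 0 ≤ a * Real.sin φ ^ 2 := by positivity
    linarith
  rw [eq_div_iff (by positivity)]
  constructor
  · intro h
    linear_combination
      (-(a * Real.sin φ + b * Real.cos φ)) * h + a ^ 2 * h1
  · intro h
    refine (mul_eq_zero.mp ?_).resolve_right hne
    linear_combination a ^ 2 * h1 - h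

theorem exists_angle (a b : ℝ) (ha : 0 < a) (hb : 0 < b) :
    ∃ φ : ℝ, 0 < Real.sin (2 * φ) ∧ a * Real.sin φ - b * Real.cos φ = 0 := by
  have hc := Real.cos_arctan_pos (b / a)
  have hs : Real.sin (Real.arctan (b / a)) = b / a * Real.cos (Real.arctan (b / a)) := by
    rw [← Real.tan_mul_cos hc.ne', Real.tan_arctan]
  refine ⟨Real.arctan (b / a), ?_, ?_⟩
  · rw [Real.sin_two_mul, hs]
    positivity
  · rw [hs]
    field_simp
    ring

/-- For `y₀ > 0`, `ε ≠ 0`, `0 < c < y₀`, the infimum of the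
rupture function `n(φ) = (96y₀⁶/(5πε²))·(y₀ - c cos²φ)/sin(2φ)` over all `φ`
with `sin(2φ) > 0` equals `n_crit = (96y₀⁶/(5πε²))√(y₀(y₀ - c))`, is attained,
and is attained exactly at the angles with `cos²φ = y₀/(2y₀ - c)`. -/
theorem rupture_index_is_least (y₀ ε c : ℝ) (hy : 0 < y₀) (hε : ε ≠ 0)
    (hc0 : 0 < c) (hc1 : c < y₀) :
    IsLeast {v : ℝ | ∃ φ : ℝ, 0 < Real.sin (2 * φ) ∧
        v = 96 * y₀ ^ 6 / (5 * Real.pi * ε ^ 2)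
              * (y₀ - c * Real.cos φ ^ 2) / Real.sin (2 * φ)}
      (96 * y₀ ^ 6 / (5 * Real.pi * ε ^ 2) * Real.sqrt (y₀ * (y₀ - c))) ∧
    ∀ φ : ℝ, 0 < Real.sin (2 * φ) →
      (96 * y₀ ^ 6 / (5 * Real.pi * ε ^ 2)
          * (y₀ - c * Real.cos φ ^ 2) / Real.sin (2 * φ)
        = 96 * y₀ ^ 6 / (5 * Real.pi * ε ^ 2) * Real.sqrt (y₀ * (y₀ - c))
        ↔ Real.cos φ ^ 2 = y₀ / (2 * y₀ - c)) := by
  obtain ⟨a, ha, hya⟩ : ∃ a : ℝ, 0 < a ∧ y₀ = a ^ 2 :=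
    ⟨√y₀, Real.sqrt_pos.mpr hy, (Real.sq_sqrt hy.le).symm⟩
  obtain ⟨b, hb, hcb⟩ : ∃ b : ℝ, 0 < b ∧ y₀ - c = b ^ 2 :=
    ⟨√(y₀ - c), Real.sqrt_pos.mpr (sub_pos.mpr hc1), (Real.sq_sqrt (sub_pos.mpr hc1).le).symm⟩
  have hsqrt : Real.sqrt (y₀ * (y₀ - c)) = a * b := by
    rw [hcb, hya, ← mul_pow, Real.sqrt_sq (by positivity)]
  have hK : 0 < 96 * y₀ ^ 6 / (5 * Real.pi * ε ^ 2) := by positivity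
  have hden : 2 * y₀ - c = a ^ 2 + b ^ 2 := by linarith
  have hc : c = a ^ 2 - b ^ 2 := by linarith
  rw [hsqrt, hden]
  -- The prefactor also contains `y₀`; it is generalized before `y₀` and `c` are rewritten.
  generalize 96 * y₀ ^ 6 / (5 * Real.pi * ε ^ 2) = K at hK ⊢
  rw [hc, hya]
  refine ⟨⟨?_, ?_⟩, ?_⟩
  · obtain ⟨φ, hφ, h⟩ := exists_angle a b ha hb
    refine ⟨φ, hφ, ?_⟩
    rw [excess_eq K a b φ hφ, h]
    simp
  · rintro v ⟨φ, hφ, rfl⟩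
    rw [excess_eq K a b φ hφ]
    exact le_add_of_nonneg_right (by positivity)
  · intro φ hφ
    rw [excess_eq K a b φ hφ, ← sin_eq_cos_iff a b φ ha hb hφ]
    simp [hK.ne', hφ.ne']
end

section
/- Let y₀ > 0, ε ≠ 0, z₀ > 0, set C = z₀²(3 y₀^{5/2} + 2 z₀)/y₀^{9/2} and c = C^{1/3} (real cube root), and assume c < y₀. Let φ ∈ ℝ satisfy sin(2φ) > 0 and cos²φ = y₀/(2y₀ − c), and set n = (96 y₀⁶/(5 π ε²)) √(y₀ (y₀ − c)). Then the cubic A(φ) r³ + B(φ,n) r² + D, with A(φ) = (2 cos³φ)/(3 y₀^{3/2}), B(φ,n) = y₀ − (5 n π ε²/(96 y₀⁶)) sin(2φ), and D = −y₀ z₀² − 2z₀³/(3 y₀^{3/2}), has a repeated real root, i.e. 27 A(φ)² D + 4 B(φ,n)³ = 0. -/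
/-!
Writing `q = cos² φ = y₀/(2y₀ - c)`, one has `sin² φ = (y₀ - c)/(2y₀ - c)`, so positivity of
`sin 2φ` gives `√(y₀(y₀ - c)) · sin 2φ = 2y₀(y₀ - c)/(2y₀ - c)`. At the critical index the quadratic
coefficient therefore collapses to `B = y₀c/(2y₀ - c) = c q`, whence `4B³ = 4C q³`. On the other side
`27A²D = 12 q³ D / y₀³ = -4C q³`, because `D = -C y₀³/3`; the two terms cancel.
-/

/-- The value of `B` at the critical index, once the prefactors of `n` have cancelled. -/
lemma sub_sqrt_mul_sin_two_mul {y c φ : ℝ} (hy : 0 < y) (hc : c < y)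
    (hs : 0 < Real.sin (2 * φ)) (hφ : Real.cos φ ^ 2 = y / (2 * y - c)) :
    y - Real.sqrt (y * (y - c)) * Real.sin (2 * φ) = c * Real.cos φ ^ 2 := by
  have hp : 0 ≤ y * (y - c) := mul_nonneg hy.le (by linarith)
  -- The denominator `d = 2y - c` replaces `c` as the free variable.
  obtain ⟨d, rfl⟩ : ∃ d, c = 2 * y - d := ⟨2 * y - c, by ring⟩
  have hd : 0 < d := by linarith
  rw [sub_sub_cancel] at hφ
  -- Both sides are nonnegative, so it suffices to compare squares.
  have h : Real.sqrt (y * (y - (2 * y - d))) * Real.sin (2 * φ) =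
      2 * (y * (y - (2 * y - d))) / d := by
    rw [← sq_eq_sq₀ (mul_nonneg (Real.sqrt_nonneg _) hs.le) (by positivity), mul_pow,
      Real.sq_sqrt hp, Real.sin_two_mul, mul_pow, mul_pow, Real.sin_sq, hφ]
    field_simp
    ring
  rw [h, hφ]
  field_simp
  ring

/-- For `y₀ > 0`, `ε ≠ 0`, `z₀ > 0`, with
`C = z₀²(3y₀^(5/2) + 2z₀)/y₀^(9/2)`, `c = C^(1/3)` (real cube root), `c < y₀`,
and `φ` satisfying `sin(2φ) > 0` and `cos²φ = y₀/(2y₀ - c)`, at the critical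
index `n = (96y₀⁶/(5πε²))√(y₀(y₀ - c))` the cubic `A(φ) r³ + B(φ,n) r² + D`
with `A(φ) = (2cos³φ)/(3y₀^(3/2))`,
`B(φ,n) = y₀ - (5nπε²/(96y₀⁶)) sin(2φ)`, and
`D = -y₀z₀² - 2z₀³/(3y₀^(3/2))` has a repeated real root, i.e.
`27 A(φ)² D + 4 B(φ,n)³ = 0`. -/
theorem discriminant_vanishes_at_critical_index (y₀ ε z₀ φ : ℝ)
    (hy : 0 < y₀) (hε : ε ≠ 0) (hz : 0 < z₀)
    (hc : (z₀ ^ 2 * (3 * y₀ ^ ((5 : ℝ) / 2) + 2 * z₀) / y₀ ^ ((9 : ℝ) / 2)) ^ ((1 : ℝ) / 3)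
            < y₀)
    (hs : 0 < Real.sin (2 * φ))
    (hφ : Real.cos φ ^ 2
        = y₀ / (2 * y₀ -
            (z₀ ^ 2 * (3 * y₀ ^ ((5 : ℝ) / 2) + 2 * z₀) / y₀ ^ ((9 : ℝ) / 2)) ^ ((1 : ℝ) / 3))) :
    27 * (2 * Real.cos φ ^ 3 / (3 * y₀ ^ ((3 : ℝ) / 2))) ^ 2
        * (-(y₀ * z₀ ^ 2) - 2 * z₀ ^ 3 / (3 * y₀ ^ ((3 : ℝ) / 2)))
      + 4 * (y₀ -
          5 * (96 * y₀ ^ 6 / (5 * Real.pi * ε ^ 2) *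
              Real.sqrt (y₀ * (y₀ -
                (z₀ ^ 2 * (3 * y₀ ^ ((5 : ℝ) / 2) + 2 * z₀) / y₀ ^ ((9 : ℝ) / 2)) ^ ((1 : ℝ) / 3))))
            * Real.pi * ε ^ 2 / (96 * y₀ ^ 6) * Real.sin (2 * φ)) ^ 3
      = 0 := by
  have hπ := Real.pi_ne_zero
  set C := z₀ ^ 2 * (3 * y₀ ^ ((5 : ℝ) / 2) + 2 * z₀) / y₀ ^ ((9 : ℝ) / 2) with hC
  have hC0 : 0 ≤ C := by positivity
  set c := C ^ ((1 : ℝ) / 3) with hcdef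
  have hc3 : c ^ 3 = C := by
    rw [hcdef, ← Real.rpow_natCast, ← Real.rpow_mul hC0]
    norm_num
  have hB : y₀ - 5 * (96 * y₀ ^ 6 / (5 * Real.pi * ε ^ 2) * Real.sqrt (y₀ * (y₀ - c)))
      * Real.pi * ε ^ 2 / (96 * y₀ ^ 6) * Real.sin (2 * φ) = c * Real.cos φ ^ 2 := by
    rw [← sub_sqrt_mul_sin_two_mul hy hc hs hφ]
    field_simp
  rw [hB, mul_pow, hc3, hC]
  -- Every half-integer power of `y₀` is an integer power of `y₀` times `t = y₀ ^ (3/2)`.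
  have h5 : y₀ ^ ((5 : ℝ) / 2) = y₀ * y₀ ^ ((3 : ℝ) / 2) := by
    rw [← Real.rpow_one_add' hy.le (by norm_num)]
    norm_num
  have h9 : y₀ ^ ((9 : ℝ) / 2) = y₀ ^ 3 * y₀ ^ ((3 : ℝ) / 2) := by
    rw [← Real.rpow_natCast, ← Real.rpow_add hy]
    norm_num
  have h3 : (y₀ ^ ((3 : ℝ) / 2)) ^ 2 = y₀ ^ 3 := by
    rw [← Real.rpow_natCast, ← Real.rpow_mul hy.le, ← Real.rpow_natCast]
    norm_num
  have ht : 0 < y₀ ^ ((3 : ℝ) / 2) := by positivity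
  rw [h5, h9, div_pow, mul_pow 3, h3]
  clear_value c C
  generalize y₀ ^ ((3 : ℝ) / 2) = t at *
  field_simp
  ring
end
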